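/- arXiv:1302.2380 — 2 statements merged into one kernel-verified Lean document; each statement's English description precedes it below -/
import Mathlib

section
/- Let D₁, D₂, D₃, D₄ be closed metric disks in ℂ such that there is a bounded connected component U of ℂ \ (D₁ ∪ D₂ ∪ D₃ ∪ D₄) whose boundary decomposes as a union of four circular arcs, one from each of ∂D₁, ∂D₂, ∂D₃, ∂D₄, appearing in this cyclic order as ∂U is traversed positively. Then ∠(D₁,D₂) + ∠(D₂,D₃) + ∠(D₃,D₄) + ∠(D₄,D₁) < 2π. -/
open Metric Real

/-- The external intersection angle between two closed metric disks in `ℂ`,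
computed from centers and radii (tangent disks get angle `0`). -/
noncomputable def extAngle (c₁ : ℂ) (r₁ : ℝ) (c₂ : ℂ) (r₂ : ℝ) : ℝ :=
  Real.arccos ((dist c₁ c₂ ^ 2 - r₁ ^ 2 - r₂ ^ 2) / (2 * r₁ * r₂))

/-!
Seen from a point `z` outside a disk, a boundary point and the center differ by an angle less than
`π / 2`. So if `z ∈ U`, the signed angles under which `z` sees the four edges of the polygon of
centers are less than `π` in absolute value. Their sum `totalTurn c z` is a multiple of `2 * π`, and
it is not zero: otherwise the partial sums would give a continuous argument of `y - z` for `y` on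
the boundary of the bounded region `U`, which cannot exist. Hence it is constantly `2 * π` or
`-2 * π` on `U`, and reversing the cyclic order we may assume the former.

Letting `z` tend to the common boundary point `p j` of the disks `j` and `j + 1`, the angle of the
centers at `p j` becomes `|2 * π - T j|`, where `T j` is the turn of the other three edges seen from
`p j`. So the external angle is at most `T j - π`. Replacing the polygon of centers by the
quadrilateral of the points `p j` costs less than `π`: `T j` is less than `π` plus the corner angle
of this quadrilateral at `p j`. The four corner angles add up to `2 * π`, and the claim follows.
-/

open scoped EuclideanGeometry

/-! ### Continuous arguments -/

/-- A continuous choice on `S` of an argument of `y - z`. Comparing in `Real.Angle` leaves the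
multiple of `2 * π` free at every point. -/
structure IsContinuousArgOn (Φ : ℂ → ℝ) (z : ℂ) (S : Set ℂ) : Prop where
  continuousOn : ContinuousOn Φ S
  coe_eq_arg : ∀ y ∈ S, (Φ y : Real.Angle) = Complex.arg (y - z)

theorem not_isContinuousArgOn_sphere (Φ : ℂ → ℝ) (z : ℂ) {R : ℝ} (hR : 0 < R) :
    ¬IsContinuousArgOn Φ z (sphere z R) := by
  intro hΦ
  let antipode : ℂ → ℂ := fun y => 2 * z - y
  have antipode_sub : ∀ y, antipode y - z = -(y - z) := fun y => by simp only [antipode]; ring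
  have mapsTo_antipode : Set.MapsTo antipode (sphere z R) (sphere z R) := fun y hy => by
    rwa [mem_sphere_iff_norm, antipode_sub, norm_neg, ← mem_sphere_iff_norm]
  have continuousOn_antipode : ContinuousOn (Φ ∘ antipode) (sphere z R) :=
    hΦ.continuousOn.comp (by fun_prop) mapsTo_antipode
  have isPreconnected : IsPreconnected (sphere z R) :=
    isPreconnected_sphere (by simp [Complex.rank_real_complex]) z R
  -- One-dimensional Borsuk–Ulam: `Φ y - Φ (antipode y)` is odd, hence vanishes somewhere.
  obtain ⟨y, hy, hΦy⟩ : ∃ y ∈ sphere z R, Φ y = Φ (antipode y) := by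
    obtain ⟨y₀, hy₀⟩ := (NormedSpace.sphere_nonempty (x := z)).2 hR.le
    have antipode_antipode : antipode (antipode y₀) = y₀ := by simp [antipode]
    rcases le_total (Φ y₀) (Φ (antipode y₀)) with hle | hle
    · exact isPreconnected.intermediate_value₂ hy₀ (mapsTo_antipode hy₀) hΦ.continuousOn
        continuousOn_antipode hle (by simpa [antipode_antipode] using hle)
    · exact isPreconnected.intermediate_value₂ (mapsTo_antipode hy₀) hy₀ hΦ.continuousOn
        continuousOn_antipode (by simpa [antipode_antipode] using hle) hle
  have sub_ne_zero : y - z ≠ 0 := by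
    rw [← norm_pos_iff, mem_sphere_iff_norm.1 hy]; exact hR
  have arg_eq := hΦ.coe_eq_arg (antipode y) (mapsTo_antipode hy)
  rw [← hΦy, hΦ.coe_eq_arg y hy, antipode_sub, Complex.arg_neg_coe_angle sub_ne_zero,
    left_eq_add] at arg_eq
  exact Real.Angle.pi_ne_zero arg_eq

theorem exists_continuous_exp_eq {H : ℂ → ℂ} (hH : Continuous H) (hH₀ : ∀ y, H y ≠ 0) :
    ∃ f : ℂ → ℂ, Continuous f ∧ ∀ y, Complex.exp (f y) = H y := by
  have : ContractibleSpace (Set.univ : Set ℂ) := convex_univ.contractibleSpace Set.univ_nonempty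
  obtain ⟨f, hf, hexp⟩ := Complex.exists_continuousOn_eqOn_exp_comp (U := Set.univ)
    (SimplyConnectedSpace.ofContractible _) isOpen_univ hH.continuousOn
    (by rintro ⟨y, -, hy⟩; exact hH₀ y hy)
  exact ⟨f, continuousOn_univ.1 hf, fun y => hexp (Set.mem_univ y)⟩

theorem exp_mul_I_eq_div_norm {t : ℝ} {w : ℂ} (hw : w ≠ 0)
    (ht : (t : Real.Angle) = Complex.arg w) : Complex.exp (t * Complex.I) = w / ‖w‖ := by
  rw [eq_div_iff (by simpa using hw), mul_comm, ← Circle.coe_exp, ← Real.Angle.toCircle_coe, ht,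
    Real.Angle.toCircle_coe, Circle.coe_exp, Complex.norm_mul_exp_arg_mul_I]

theorem coe_im_eq_arg_exp (w : ℂ) : (w.im : Real.Angle) = Complex.arg (Complex.exp w) := by
  rw [Complex.arg_exp, ← Real.Angle.toReal_coe, Real.Angle.coe_toReal]

theorem IsContinuousArgOn.exists_continuous_extension {Φ : ℂ → ℝ} {z : ℂ} {U : Set ℂ}
    (hΦ : IsContinuousArgOn Φ z (frontier U)) (hz : z ∈ interior U) :
    ∃ H : ℂ → ℂ, Continuous H ∧ (∀ y, H y ≠ 0) ∧ ∀ y ∉ U, H y = (y - z) / ‖y - z‖ := by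
  classical
  obtain ⟨Ψ, hΨ⟩ := ContinuousMap.exists_restrict_eq (isClosed_frontier (s := U))
    ⟨_, continuousOn_iff_continuous_domRestrict.1 hΦ.continuousOn⟩
  have hΨΦ : ∀ y ∈ frontier U, Ψ y = Φ y := fun y hy => DFunLike.congr_fun hΨ ⟨y, hy⟩
  have sub_ne_zero : ∀ y ∉ interior U, y - z ≠ 0 := fun y hy h => hy (sub_eq_zero.1 h ▸ hz)
  refine ⟨fun y => if y ∈ U then Complex.exp (Ψ y * Complex.I) else (y - z) / ‖y - z‖,
    continuous_if (fun y hy => ?_) (by fun_prop) ?_, fun y => ?_, fun y hy => if_neg hy⟩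
  · exact exp_mul_I_eq_div_norm (sub_ne_zero y hy.2) (hΨΦ y hy ▸ hΦ.coe_eq_arg y hy)
  · refine ContinuousOn.div (by fun_prop) (by fun_prop) fun y hy => ?_
    simpa using sub_ne_zero y (closure_compl.subset hy)
  · by_cases hy : y ∈ U
    · simp [hy]
    · have := sub_ne_zero y fun h => hy (interior_subset h)
      simpa [hy] using this

theorem not_isContinuousArgOn_frontier {U : Set ℂ} (hbd : Bornology.IsBounded U) {z : ℂ}
    (hz : z ∈ interior U) (Φ : ℂ → ℝ) : ¬IsContinuousArgOn Φ z (frontier U) := by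
  intro hΦ
  obtain ⟨H, hH, H_ne_zero, H_eq⟩ := hΦ.exists_continuous_extension hz
  obtain ⟨f, hf, hexp⟩ := exists_continuous_exp_eq hH H_ne_zero
  obtain ⟨R, hR, hUR⟩ := hbd.subset_ball_lt 0 z
  refine not_isContinuousArgOn_sphere (fun y => (f y).im) z hR ⟨by fun_prop, fun y hy => ?_⟩
  have norm_pos : 0 < ‖y - z‖ := by rwa [mem_sphere_iff_norm.1 hy]
  rw [coe_im_eq_arg_exp, hexp, H_eq y fun h => (hUR h).ne hy, div_eq_inv_mul,
    ← Complex.ofReal_inv, Complex.arg_real_mul _ (inv_pos.2 norm_pos)]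

/-! ### Gluing and cyclic sums -/

theorem exists_continuousOn_iUnion {ι X Y : Type*} [Finite ι] [Nonempty ι] [TopologicalSpace X]
    [TopologicalSpace Y] {S : ι → Set X} {f : ι → X → Y} (hS : ∀ i, IsClosed (S i))
    (hf : ∀ i, ContinuousOn (f i) (S i))
    (hcompat : ∀ i j, ∀ y ∈ S i ∩ S j, f i y = f j y) :
    ∃ g : X → Y, ContinuousOn g (⋃ i, S i) ∧ ∀ i, Set.EqOn g (f i) (S i) := by
  have eqOn : ∀ i, Set.EqOn (fun y => f (Classical.epsilon fun k => y ∈ S k) y) (f i) (S i) :=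
    fun i y hy => hcompat _ i y ⟨Classical.epsilon_spec (p := fun k => y ∈ S k) ⟨i, hy⟩, hy⟩
  exact ⟨_, (locallyFinite_of_finite S).continuousOn_iUnion hS fun i => (hf i).congr (eqOn i), eqOn⟩

theorem exists_real_lift_of_sum_eq_zero {n : ℕ} [NeZero n] {θ : Fin n → Real.Angle}
    {ψ : Fin n → ℝ} (hψ : ∀ i, (ψ i : Real.Angle) = θ (i + 1) - θ i) (hsum : ∑ i, ψ i = 0) :
    ∃ φ : Fin n → ℝ, (∀ i, (φ i : Real.Angle) = θ i) ∧ ∀ i, φ (i + 1) = φ i + ψ i := by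
  obtain ⟨m, rfl⟩ := Nat.exists_eq_succ_of_ne_zero (NeZero.ne n)
  let φ : Fin (m + 1) → ℝ := fun i => (θ 0).toReal + Fin.partialSum ψ i.castSucc
  have φ_succ : ∀ i, φ (i + 1) = φ i + ψ i := fun i => by
    induction i using Fin.lastCases with
    | last =>
      have partialSum_last : Fin.partialSum ψ (Fin.last m).succ = 0 := by
        rw [← hsum, Fin.partialSum, List.take_of_length_le (by simp), List.sum_ofFn]
      rw [Fin.partialSum_succ] at partialSum_last
      simp [φ, add_assoc, partialSum_last]
    | cast i => simp [φ, Fin.partialSum_succ ψ i.castSucc, add_assoc]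
  refine ⟨φ, fun i => ?_, φ_succ⟩
  induction i using Fin.induction with
  | zero => simp [φ]
  | succ i ih =>
    rw [← Fin.coeSucc_eq_succ, φ_succ, Real.Angle.coe_add, ih, hψ, add_sub_cancel]

theorem sum_comp_neg_add_one {n : ℕ} [NeZero n] {M : Type*} [AddCommMonoid M] (f : Fin n → M) :
    ∑ i, f (-(i + 1)) = ∑ i, f i :=
  Equiv.sum_comp ((Equiv.addRight 1).trans (Equiv.neg _)) f

/-! ### Real representatives of angles -/

theorem abs_toReal_coe_of_abs_le_pi {t : ℝ} (ht : |t| ≤ π) : |(t : Real.Angle).toReal| = |t| := by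
  rcases le_total 0 t with h | h
  · rw [abs_of_nonneg h] at ht ⊢
    exact Real.Angle.abs_toReal_coe_eq_self_iff.2 ⟨h, ht⟩
  · rw [abs_of_nonpos h] at ht ⊢
    simpa using Real.Angle.abs_toReal_neg_coe_eq_self_iff.2 ⟨neg_nonneg.2 h, ht⟩

theorem toReal_coe_of_abs_lt_pi {t : ℝ} (ht : |t| < π) : (t : Real.Angle).toReal = t :=
  Real.Angle.toReal_coe_eq_self_iff.2 ⟨(abs_lt.1 ht).1, (abs_lt.1 ht).2.le⟩

theorem continuousAt_toReal {θ : Real.Angle} (hθ : θ ≠ π) : ContinuousAt Real.Angle.toReal θ := by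
  have : Fact (0 < 2 * π) := ⟨two_pi_pos⟩
  have ne : θ ≠ ((-π : ℝ) : Real.Angle) := by rwa [Real.Angle.coe_neg, Real.Angle.neg_coe_pi]
  exact continuous_subtype_val.continuousAt.comp (AddCircle.continuousAt_equivIoc (2 * π) (-π) ne)

theorem abs_toReal_lt_pi {θ : Real.Angle} (hθ : θ ≠ π) : |θ.toReal| < π :=
  abs_lt.2 ⟨θ.neg_pi_lt_toReal, θ.toReal_le_pi.lt_of_ne (mt Real.Angle.toReal_eq_pi_iff.1 hθ)⟩

theorem sign_coe_eq_sign_pi_sub {t : ℝ} (h₀ : 0 < t) (h₁ : t < 2 * π) :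
    (t : Real.Angle).sign = SignType.sign (π - t) := by
  have toReal_eq : ((t : Real.Angle) - π).toReal = t - π := by
    rw [← Real.Angle.coe_sub]
    exact toReal_coe_of_abs_lt_pi (abs_lt.2 ⟨by linarith, by linarith⟩)
  have ne_pi : (t : Real.Angle) - π ≠ π := fun h => by
    rw [h, Real.Angle.toReal_pi] at toReal_eq; linarith
  rw [← neg_sub t π, Left.sign_neg, ← toReal_eq, Real.Angle.sign_toReal ne_pi,
    Real.Angle.sign_sub_pi, neg_neg]

theorem eq_of_coe_eq_of_abs_sub_lt {s t : ℝ} (h : (s : Real.Angle) = t)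
    (hst : |s - t| < 2 * π) : s = t := by
  obtain ⟨k, hk⟩ := Real.Angle.angle_eq_iff_two_pi_dvd_sub.1 h
  have : |(k : ℝ)| < 1 := by
    rw [hk, abs_mul, abs_of_pos two_pi_pos] at hst
    exact lt_of_mul_lt_mul_left (by simpa using hst) two_pi_pos.le
  have : k = 0 := Int.abs_lt_one_iff.1 (by exact_mod_cast this)
  simpa [this, sub_eq_zero] using hk

section Plane

variable {V P : Type*} [NormedAddCommGroup V] [InnerProductSpace ℝ V] [MetricSpace P]
  [NormedAddTorsor V P]

/-! ### Oriented angles -/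

theorem left_ne_of_angle_lt_pi_div_two {a z b : P} (h : ∠ a z b < π / 2) : a ≠ z := by
  rintro rfl
  exact h.ne (EuclideanGeometry.angle_self_left a b)

theorem right_ne_of_angle_lt_pi_div_two {a z b : P} (h : ∠ a z b < π / 2) : b ≠ z :=
  left_ne_of_angle_lt_pi_div_two (EuclideanGeometry.angle_comm a z b ▸ h)

theorem angle_lt_pi_div_two_of_dist_le {z c p : P} (hne : p ≠ z) (h : dist p c ≤ dist z c) :
    ∠ c z p < π / 2 := by
  have inner_pos : 0 < inner ℝ (z -ᵥ p) (z -ᵥ c) :=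
    (EuclideanGeometry.inner_pos_or_eq_of_dist_le_radius (s := ⟨c, dist z c⟩) (p₁ := z) rfl
      h).resolve_right hne.symm
  rw [← neg_vsub_eq_vsub_rev, ← neg_vsub_eq_vsub_rev c, inner_neg_neg, real_inner_comm] at inner_pos
  rw [EuclideanGeometry.angle, InnerProductGeometry.angle, arccos_lt_pi_div_two]
  exact div_pos inner_pos (inner_pos.trans_le (real_inner_le_norm _ _))

section Oriented

variable [Fact (Module.finrank ℝ V = 2)] [Module.Oriented ℝ V (Fin 2)]

theorem abs_toReal_oangle_lt_pi_div_two {a z b : P} (h : ∠ a z b < π / 2) :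
    |(∡ a z b).toReal| < π / 2 := by
  rwa [← EuclideanGeometry.angle_eq_abs_oangle_toReal (left_ne_of_angle_lt_pi_div_two h)
    (right_ne_of_angle_lt_pi_div_two h)]

theorem oangle_ne_pi_of_angle_lt_pi_div_two {a z b : P} (h : ∠ a z b < π / 2) : ∡ a z b ≠ π := by
  intro h'
  have := abs_toReal_oangle_lt_pi_div_two h
  rw [h', Real.Angle.toReal_pi, abs_of_pos pi_pos] at this
  linarith [pi_pos]

theorem abs_toReal_oangle_add_lt_pi {a z b c : P} (hab : ∠ a z b < π / 2)
    (hbc : ∠ b z c < π / 2) : |(∡ a z b).toReal + (∡ b z c).toReal| < π := by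
  linarith [abs_add_le (∡ a z b).toReal (∡ b z c).toReal, abs_toReal_oangle_lt_pi_div_two hab,
    abs_toReal_oangle_lt_pi_div_two hbc]

theorem coe_toReal_oangle_add {a z b c : P} (hab : ∠ a z b < π / 2) (hbc : ∠ b z c < π / 2) :
    (((∡ a z b).toReal + (∡ b z c).toReal : ℝ) : Real.Angle) = ∡ a z c := by
  rw [Real.Angle.coe_add, Real.Angle.coe_toReal, Real.Angle.coe_toReal,
    EuclideanGeometry.oangle_add (left_ne_of_angle_lt_pi_div_two hab)
      (right_ne_of_angle_lt_pi_div_two hab) (right_ne_of_angle_lt_pi_div_two hbc)]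

theorem toReal_oangle_add {a z b c : P} (hab : ∠ a z b < π / 2) (hbc : ∠ b z c < π / 2) :
    (∡ a z b).toReal + (∡ b z c).toReal = (∡ a z c).toReal := by
  rw [← toReal_coe_of_abs_lt_pi (abs_toReal_oangle_add_lt_pi hab hbc),
    coe_toReal_oangle_add hab hbc]

theorem oangle_ne_pi_of_angle_lt_of_angle_lt {a z b c : P} (hab : ∠ a z b < π / 2)
    (hbc : ∠ b z c < π / 2) : ∡ a z c ≠ π := by
  intro h
  have := abs_toReal_oangle_add_lt_pi hab hbc
  rw [toReal_oangle_add hab hbc, h, Real.Angle.toReal_pi, abs_of_pos pi_pos] at this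
  exact this.false

theorem toReal_oangle_rev {a z b : P} (h : ∡ a z b ≠ π) :
    (∡ b z a).toReal = -(∡ a z b).toReal := by
  rw [EuclideanGeometry.oangle_rev, Real.Angle.toReal_neg_eq_neg_toReal_iff.2 h]

theorem continuousAt_toReal_oangle_apex {a z b : P} (ha : a ≠ z) (hb : b ≠ z) (h : ∡ a z b ≠ π) :
    ContinuousAt (fun y => (∡ a y b).toReal) z :=
  (continuousAt_toReal h).comp (f := fun y => ∡ a y b)
    ((EuclideanGeometry.continuousAt_oangle (x := (a, z, b)) ha hb).comp (f := fun y => (a, y, b))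
      (by fun_prop))

theorem continuousAt_toReal_oangle_right {a z b : P} (ha : a ≠ z) (hb : b ≠ z) (h : ∡ a z b ≠ π) :
    ContinuousAt (fun y => (∡ a z y).toReal) b :=
  (continuousAt_toReal h).comp (f := fun y => ∡ a z y)
    ((EuclideanGeometry.continuousAt_oangle (x := (a, z, b)) ha hb).comp (f := fun y => (a, z, y))
      (by fun_prop))

theorem toReal_oangle_add_toReal_oangle_add_eq_pi {p₁ p₂ p₃ : P} {t : ℝ} (h₁₂ : p₂ ≠ p₁)
    (h₂₃ : p₃ ≠ p₂) (h₃₁ : p₁ ≠ p₃) (hp₂ : ∡ p₁ p₂ p₃ ≠ π) (hp₃ : ∡ p₂ p₃ p₁ ≠ π)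
    (ht : (t : Real.Angle) = ∡ p₃ p₁ p₂) (ht₀ : 0 < t) (ht₁ : t < 2 * π) :
    (∡ p₁ p₂ p₃).toReal + (∡ p₂ p₃ p₁).toReal + t = π := by
  have sign_p₃ := EuclideanGeometry.oangle_rotate_sign p₁ p₂ p₃
  have sign_t := sign_coe_eq_sign_pi_sub ht₀ ht₁
  rw [ht, EuclideanGeometry.oangle_rotate_sign, sign_p₃, ← Real.Angle.sign_toReal hp₂] at sign_t
  rw [← Real.Angle.sign_toReal hp₂, ← Real.Angle.sign_toReal hp₃] at sign_p₃
  have lt_p₂ := abs_lt.1 (abs_toReal_lt_pi hp₂)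
  have lt_p₃ := abs_lt.1 (abs_toReal_lt_pi hp₃)
  refine eq_of_coe_eq_of_abs_sub_lt ?_ ?_
  · rw [Real.Angle.coe_add, Real.Angle.coe_add, Real.Angle.coe_toReal, Real.Angle.coe_toReal, ht,
      EuclideanGeometry.oangle_add_oangle_add_oangle_eq_pi h₁₂ h₂₃ h₃₁]
  rw [abs_lt]
  rcases lt_trichotomy t π with hlt | heq | hgt
  · rw [sign_pos (sub_pos.2 hlt), sign_eq_one_iff] at sign_t
    rw [sign_pos sign_t, sign_eq_one_iff] at sign_p₃
    constructor <;> linarith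
  · rw [heq, sub_self, _root_.sign_zero, _root_.sign_eq_zero_iff] at sign_t
    constructor <;> linarith
  · rw [sign_neg (sub_neg.2 hgt), sign_eq_neg_one_iff] at sign_t
    rw [sign_neg sign_t, sign_eq_neg_one_iff] at sign_p₃
    constructor <;> linarith

theorem sum_oangle_eq_zero {n : ℕ} [NeZero n] {c : Fin n → P} {z : P} (h : ∀ i, c i ≠ z) :
    ∑ i, ∡ (c i) z (c (i + 1)) = 0 := by
  have oangle_eq_sub : ∀ i, ∡ (c i) z (c (i + 1)) = ∡ (c 0) z (c (i + 1)) - ∡ (c 0) z (c i) :=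
    fun i => by rw [← EuclideanGeometry.oangle_add (h 0) (h i) (h _), add_sub_cancel_left]
  rw [Finset.sum_congr rfl fun i _ => oangle_eq_sub i, Finset.sum_sub_distrib, sub_eq_zero]
  exact Equiv.sum_comp (Equiv.addRight 1) fun i => ∡ (c 0) z (c i)

/-- The interior angle at `p j` of the quadrilateral `p 0, p 1, p 2, p 3`, computed as the sum of
the two signed angles into which the diagonal through `p j` divides it. -/
noncomputable def cornerAngle (p : Fin 4 → P) (j : Fin 4) : ℝ :=
  (∡ (p (j + 1)) (p j) (p (j + 2))).toReal + (∡ (p (j + 2)) (p j) (p (j + 3))).toReal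

theorem sum_cornerAngle {p : Fin 4 → P} (hp : Function.Injective p)
    (h₁ : ∀ j, ∡ (p (j + 1)) (p j) (p (j + 2)) ≠ π) (h₂ : ∀ j, ∡ (p (j + 2)) (p j) (p (j + 3)) ≠ π)
    (hpos : ∀ j, 0 < cornerAngle p j) : ∑ j, cornerAngle p j = 2 * π := by
  have lt_two_pi : ∀ j, cornerAngle p j < 2 * π := fun j => by
    rw [cornerAngle]
    linarith [(abs_lt.1 (abs_toReal_lt_pi (h₁ j))).2, (abs_lt.1 (abs_toReal_lt_pi (h₂ j))).2]
  have coe_cornerAngle : ∀ j,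
      (cornerAngle p j : Real.Angle) = ∡ (p (j + 1)) (p j) (p (j + 3)) := fun j => by
    rw [cornerAngle, Real.Angle.coe_add, Real.Angle.coe_toReal, Real.Angle.coe_toReal]
    exact EuclideanGeometry.oangle_add (hp.ne (by simp)) (hp.ne (by simp)) (hp.ne (by simp))
  have triangle : ∀ j : Fin 4, (∡ (p (j + 1)) (p j) (p (j + 2))).toReal
      + (∡ (p (j + 2 + 2)) (p (j + 2)) (p (j + 2 + 3))).toReal + cornerAngle p (j + 1) = π := by
    intro j
    have h₃ := h₂ (j + 2)
    have ht := coe_cornerAngle (j + 1)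
    simp only [add_assoc j, Fin.reduceAdd, add_zero] at h₃ ht ⊢
    exact toReal_oangle_add_toReal_oangle_add_eq_pi (hp.ne (by simp)) (hp.ne (by simp))
      (hp.ne (by simp)) (h₁ j) h₃ ht (hpos _) (lt_two_pi _)
  have sum_triangle := Finset.sum_congr rfl fun j (_ : j ∈ Finset.univ) => triangle j
  have sum_shift : ∀ (k : Fin 4) (f : Fin 4 → ℝ), ∑ j, f (j + k) = ∑ j, f j := fun k f =>
    Equiv.sum_comp (Equiv.addRight k) f
  rw [Finset.sum_add_distrib, Finset.sum_add_distrib, sum_shift 1 (cornerAngle p),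
    sum_shift 2 fun j => (∡ (p (j + 2)) (p j) (p (j + 3))).toReal,
    Fin.sum_const, nsmul_eq_mul, Nat.cast_ofNat] at sum_triangle
  have sum_cornerAngle_eq : ∑ j, cornerAngle p j = ∑ j, (∡ (p (j + 1)) (p j) (p (j + 2))).toReal
      + ∑ j, (∡ (p (j + 2)) (p j) (p (j + 3))).toReal := Finset.sum_add_distrib
  linarith

/-- The total signed angle under which `z` sees the closed polygon `c 0, c 1, …`: the winding number
of the polygon about `z`, times `2 * π`, as long as no edge passes through `z`. -/
noncomputable def totalTurn {n : ℕ} [NeZero n] (c : Fin n → P) (z : P) : ℝ :=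
  ∑ i, (∡ (c i) z (c (i + 1))).toReal

/-- The part of `totalTurn c z` contributed by the edges other than the one from `c j` to
`c (j + 1)`. -/
noncomputable def turnExcept {n : ℕ} [NeZero n] (c : Fin n → P) (j : Fin n) (z : P) : ℝ :=
  ∑ i ∈ {j}ᶜ, (∡ (c i) z (c (i + 1))).toReal

section Turn

variable {n : ℕ} [NeZero n] {c : Fin n → P}

theorem toReal_oangle_add_turnExcept (c : Fin n → P) (j : Fin n) (z : P) :
    (∡ (c j) z (c (j + 1))).toReal + turnExcept c j z = totalTurn c z :=
  (Fintype.sum_eq_add_sum_compl j fun i => (∡ (c i) z (c (i + 1))).toReal).symm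

theorem coe_totalTurn {z : P} (hz : ∀ i, c i ≠ z) : (totalTurn c z : Real.Angle) = 0 := by
  rw [totalTurn, ← Real.Angle.coe_coeHom, map_sum, ← sum_oangle_eq_zero hz]
  exact Finset.sum_congr rfl fun i _ => Real.Angle.coe_toReal _

theorem coe_turnExcept {z : P} (hz : ∀ i, c i ≠ z) (j : Fin n) :
    (turnExcept c j z : Real.Angle) = -∡ (c j) z (c (j + 1)) := by
  rw [eq_neg_iff_add_eq_zero, add_comm, ← coe_totalTurn hz, ← toReal_oangle_add_turnExcept c j,
    Real.Angle.coe_add, Real.Angle.coe_toReal]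

theorem continuousAt_sum_toReal_oangle {z : P} {s : Finset (Fin n)} (hz : ∀ i, c i ≠ z)
    (hs : ∀ i ∈ s, ∡ (c i) z (c (i + 1)) ≠ π) :
    ContinuousAt (fun y => ∑ i ∈ s, (∡ (c i) y (c (i + 1))).toReal) z :=
  tendsto_finsetSum s fun i hi => continuousAt_toReal_oangle_apex (hz i) (hz _) (hs i hi)

end Turn

end Oriented

/-! ### Cycles of disks -/

/-- Closed disks with centers `c i` and radii `r i`, cyclically indexed, such that the consecutive
boundary circles `i` and `i + 1` pass through `p i`, the vertices `p j` are distinct, and none of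
them is interior to any disk. -/
structure IsDiskCycle {n : ℕ} [NeZero n] (c p : Fin n → P) (r : Fin n → ℝ) : Prop where
  radius_pos : ∀ i, 0 < r i
  dist_vertex : ∀ i, dist (p i) (c i) = r i
  dist_vertex_succ : ∀ i, dist (p i) (c (i + 1)) = r (i + 1)
  le_dist_vertex : ∀ i j, r i ≤ dist (p j) (c i)
  injective : Function.Injective p

/-- No point of `S` lies on two different circles `sphere (c i) (r i)`, except that `p i` may lie on
the consecutive circles `i` and `i + 1`. -/
def MeetOnlyAtVertices {n : ℕ} [NeZero n] (c p : Fin n → P) (r : Fin n → ℝ) (S : Set P) : Prop :=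
  ∀ i k, i ≠ k → ∀ y ∈ S, y ∈ sphere (c i) (r i) → y ∈ sphere (c k) (r k) →
    k = i + 1 ∧ y = p i ∨ i = k + 1 ∧ y = p k

theorem exists_isDiskCycle {c : Fin 4 → P} {r : Fin 4 → ℝ} (hr : ∀ i, 0 < r i) {S : Set P}
    (hS : ∀ y ∈ S, ∀ i, r i ≤ dist y (c i))
    (hopp : ∀ i, Disjoint (S ∩ sphere (c i) (r i)) (sphere (c (i + 2)) (r (i + 2))))
    (hconsec : ∀ i, ∃! y, y ∈ S ∩ sphere (c i) (r i) ∩ sphere (c (i + 1)) (r (i + 1))) :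
    ∃ p, IsDiskCycle c p r ∧ (∀ i, p i ∈ S) ∧ MeetOnlyAtVertices c p r S := by
  choose p hp hp_unique using hconsec
  have cases_index : ∀ i k : Fin 4, i ≠ k → k = i + 1 ∨ i = k + 1 ∨ k = i + 2 := by decide
  have vertex_ne_succ : ∀ i, p i ≠ p (i + 1) := fun i heq =>
    Set.disjoint_left.1 (hopp i) (hp i).1 (by simpa [heq, add_assoc] using (hp (i + 1)).2)
  refine ⟨p, ⟨hr, fun i => (hp i).1.2, fun i => (hp i).2, fun i j => hS _ (hp j).1.1 i, ?_⟩,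
    fun i => (hp i).1.1, ?_⟩
  · refine Function.injective_iff_pairwise_ne.2 fun i k hik heq => ?_
    rcases cases_index i k hik with rfl | rfl | rfl
    · exact vertex_ne_succ i heq
    · exact vertex_ne_succ k heq.symm
    · exact Set.disjoint_left.1 (hopp i) (hp i).1 (heq ▸ (hp (i + 2)).1.2)
  · intro i k hik y hy hyi hyk
    rcases cases_index i k hik with rfl | rfl | rfl
    · exact Or.inl ⟨rfl, hp_unique i y ⟨⟨hy, hyi⟩, hyk⟩⟩
    · exact Or.inr ⟨rfl, hp_unique k y ⟨⟨hy, hyk⟩, hyi⟩⟩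
    · exact (Set.disjoint_left.1 (hopp i) ⟨hy, hyi⟩ hyk).elim

namespace IsDiskCycle

section General

variable {n : ℕ} [NeZero n] {c p : Fin n → P} {r : Fin n → ℝ} {z : P}

theorem center_ne (h : IsDiskCycle c p r) (hz : ∀ i, r i ≤ dist z (c i)) (i : Fin n) : c i ≠ z :=
  (dist_pos.1 ((h.radius_pos i).trans_le (hz i))).symm

theorem vertex_ne (h : IsDiskCycle c p r) (hz : ∀ i, r i < dist z (c i)) (i : Fin n) : p i ≠ z := by
  rintro rfl
  exact (hz i).ne' (h.dist_vertex i)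

theorem angle_center_vertex_lt (h : IsDiskCycle c p r) (hz : ∀ i, r i ≤ dist z (c i)) {i : Fin n}
    (hi : p i ≠ z) : ∠ (c i) z (p i) < π / 2 :=
  angle_lt_pi_div_two_of_dist_le hi ((h.dist_vertex i).trans_le (hz i))

theorem angle_vertex_center_lt (h : IsDiskCycle c p r) (hz : ∀ i, r i ≤ dist z (c i)) {i : Fin n}
    (hi : p i ≠ z) : ∠ (p i) z (c (i + 1)) < π / 2 := by
  rw [EuclideanGeometry.angle_comm]
  exact angle_lt_pi_div_two_of_dist_le hi ((h.dist_vertex_succ i).trans_le (hz _))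

theorem reverse (h : IsDiskCycle c p r) :
    IsDiskCycle (fun i => c (-i)) (fun i => p (-(i + 1))) fun i => r (-i) where
  radius_pos i := h.radius_pos (-i)
  dist_vertex i := by simpa using h.dist_vertex_succ (-(i + 1))
  dist_vertex_succ i := h.dist_vertex (-(i + 1))
  le_dist_vertex i j := h.le_dist_vertex (-i) _
  injective := h.injective.comp (neg_injective.comp (add_left_injective 1))

variable [Fact (Module.finrank ℝ V = 2)] [Module.Oriented ℝ V (Fin 2)]

theorem toReal_oangle_center_center (h : IsDiskCycle c p r) (hz : ∀ i, r i ≤ dist z (c i))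
    {i : Fin n} (hi : p i ≠ z) : (∡ (c i) z (c (i + 1))).toReal
      = (∡ (c i) z (p i)).toReal + (∡ (p i) z (c (i + 1))).toReal :=
  (toReal_oangle_add (h.angle_center_vertex_lt hz hi) (h.angle_vertex_center_lt hz hi)).symm

theorem toReal_oangle_vertex_vertex (h : IsDiskCycle c p r) (hz : ∀ i, r i ≤ dist z (c i))
    {i : Fin n} (hi : p i ≠ z) (hi' : p (i + 1) ≠ z) : (∡ (p i) z (p (i + 1))).toReal
      = (∡ (p i) z (c (i + 1))).toReal + (∡ (c (i + 1)) z (p (i + 1))).toReal :=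
  (toReal_oangle_add (h.angle_vertex_center_lt hz hi) (h.angle_center_vertex_lt hz hi')).symm

theorem oangle_vertex_vertex_ne_pi (h : IsDiskCycle c p r) (hz : ∀ i, r i ≤ dist z (c i))
    {i : Fin n} (hi : p i ≠ z) (hi' : p (i + 1) ≠ z) : ∡ (p i) z (p (i + 1)) ≠ π :=
  oangle_ne_pi_of_angle_lt_of_angle_lt (h.angle_vertex_center_lt hz hi)
    (h.angle_center_vertex_lt hz hi')

theorem oangle_center_center_ne_pi (h : IsDiskCycle c p r) (hz : ∀ i, r i ≤ dist z (c i))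
    {i : Fin n} (hi : p i ≠ z) : ∡ (c i) z (c (i + 1)) ≠ π :=
  oangle_ne_pi_of_angle_lt_of_angle_lt (h.angle_center_vertex_lt hz hi)
    (h.angle_vertex_center_lt hz hi)

theorem abs_totalTurn_lt (h : IsDiskCycle c p r) (hz : ∀ i, r i < dist z (c i)) :
    |totalTurn c z| < n * π := by
  calc |totalTurn c z| ≤ ∑ i, |(∡ (c i) z (c (i + 1))).toReal| := Finset.abs_sum_le_sum_abs _ _
    _ < ∑ _i : Fin n, π := Finset.sum_lt_sum_of_nonempty Finset.univ_nonempty fun i _ =>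
      abs_toReal_lt_pi (h.oangle_center_center_ne_pi (fun i => (hz i).le) (h.vertex_ne hz i))
    _ = n * π := by simp

theorem continuousAt_totalTurn (h : IsDiskCycle c p r) (hz : ∀ i, r i < dist z (c i)) :
    ContinuousAt (totalTurn c) z :=
  continuousAt_sum_toReal_oangle (h.center_ne fun i => (hz i).le) fun i _ =>
    h.oangle_center_center_ne_pi (fun i => (hz i).le) (h.vertex_ne hz i)

theorem continuousAt_turnExcept (h : IsDiskCycle c p r) (j : Fin n) :
    ContinuousAt (turnExcept c j) (p j) :=
  continuousAt_sum_toReal_oangle (h.center_ne fun i => h.le_dist_vertex i j) fun i hi =>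
    h.oangle_center_center_ne_pi (fun i => h.le_dist_vertex i j)
      (h.injective.ne (by simpa using hi))

theorem totalTurn_eq_or_eq_neg (h : IsDiskCycle c p r) (hn : n ≤ 4) (hz : ∀ i, r i < dist z (c i))
    (h₀ : totalTurn c z ≠ 0) : totalTurn c z = 2 * π ∨ totalTurn c z = -(2 * π) := by
  obtain ⟨k, hk⟩ := Real.Angle.angle_eq_iff_two_pi_dvd_sub.1
    (coe_totalTurn (h.center_ne fun i => (hz i).le))
  rw [sub_zero] at hk
  have abs_k_lt : |(k : ℝ)| < 2 := by
    have := h.abs_totalTurn_lt hz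
    have hn' : (n : ℝ) * π ≤ 4 * π := by gcongr; exact_mod_cast hn
    rw [hk, abs_mul, abs_of_pos two_pi_pos] at this
    nlinarith [pi_pos]
  have abs_k_lt' : |k| < 2 := by exact_mod_cast abs_k_lt
  have k_ne : k ≠ 0 := by rintro rfl; simp [hk] at h₀
  obtain rfl | rfl : k = 1 ∨ k = -1 := by
    rw [abs_lt] at abs_k_lt'
    omega
  · exact Or.inl (by simp [hk])
  · exact Or.inr (by simp [hk])

theorem abs_two_pi_sub_turnExcept_le (h : IsDiskCycle c p r) {U : Set P}
    (hturn : ∀ z ∈ U, totalTurn c z = 2 * π) {j : Fin n} (hj : p j ∈ closure U) :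
    |2 * π - turnExcept c j (p j)| ≤ π := by
  have : (nhdsWithin (p j) U).NeBot := mem_closure_iff_nhdsWithin_neBot.1 hj
  have continuousAt_abs : ContinuousAt (fun z => |2 * π - turnExcept c j z|) (p j) :=
    (continuousAt_const.sub (h.continuousAt_turnExcept j)).abs
  refine le_of_tendsto (continuousAt_abs.continuousWithinAt (s := U)) ?_
  filter_upwards [self_mem_nhdsWithin] with z hz
  rw [← hturn z hz, ← toReal_oangle_add_turnExcept c j, add_sub_cancel_right]
  exact Real.Angle.abs_toReal_le_pi _

theorem angle_vertex_eq (h : IsDiskCycle c p r) {j : Fin n}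
    (hle : |2 * π - turnExcept c j (p j)| ≤ π) :
    ∠ (c j) (p j) (c (j + 1)) = |2 * π - turnExcept c j (p j)| := by
  have center_ne := h.center_ne fun i => h.le_dist_vertex i j
  rw [EuclideanGeometry.angle_eq_abs_oangle_toReal (center_ne j) (center_ne _),
    ← abs_toReal_coe_of_abs_le_pi hle, Real.Angle.coe_sub, Real.Angle.coe_two_pi, zero_sub,
    coe_turnExcept center_ne, neg_neg]

theorem totalTurn_reverse (h : IsDiskCycle c p r) (hz : ∀ i, r i < dist z (c i)) :
    totalTurn (fun i => c (-i)) z = -totalTurn c z := by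
  rw [totalTurn, totalTurn, ← Finset.sum_neg_distrib, ← sum_comp_neg_add_one]
  refine Finset.sum_congr rfl fun i _ => ?_
  rw [← toReal_oangle_rev (h.oangle_center_center_ne_pi (fun i => (hz i).le) (h.vertex_ne hz _))]
  simp

end General

section Quadrilateral

variable [Fact (Module.finrank ℝ V = 2)] [Module.Oriented ℝ V (Fin 2)]
  {c p : Fin 4 → P} {r : Fin 4 → ℝ}

theorem turnExcept_lt_cornerAngle_add_pi (h : IsDiskCycle c p r) (j : Fin 4) :
    turnExcept c j (p j) < cornerAngle p j + π := by
  have compl_eq : ({j}ᶜ : Finset (Fin 4)) = {j + 1, j + 2, j + 3} := by decide +revert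
  have hz : ∀ i, r i ≤ dist (p j) (c i) := fun i => h.le_dist_vertex i j
  have ne₁ : p (j + 1) ≠ p j := h.injective.ne (by simp)
  have ne₂ : p (j + 2) ≠ p j := h.injective.ne (by simp)
  have ne₃ : p (j + 3) ≠ p j := h.injective.ne (by simp)
  have edge₁₂ := h.toReal_oangle_center_center hz ne₁
  have edge₂₃ := h.toReal_oangle_center_center hz ne₂
  have edge₃₀ := h.toReal_oangle_center_center hz ne₃
  have chord₁₂ := h.toReal_oangle_vertex_vertex hz ne₁ (by simpa [add_assoc] using ne₂)
  have chord₂₃ := h.toReal_oangle_vertex_vertex hz ne₂ (by simpa [add_assoc] using ne₃)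
  have first_lt := abs_lt.1 (abs_toReal_oangle_lt_pi_div_two (h.angle_center_vertex_lt hz ne₁))
  have last_lt := abs_lt.1 (abs_toReal_oangle_lt_pi_div_two (h.angle_vertex_center_lt hz ne₃))
  rw [turnExcept, compl_eq, Finset.sum_insert (by simp), Finset.sum_pair (by simp), cornerAngle]
  simp only [add_assoc j, Fin.reduceAdd, add_zero] at *
  linarith

theorem sum_turnExcept_lt (h : IsDiskCycle c p r) (hle : ∀ j, π ≤ turnExcept c j (p j)) :
    ∑ j, turnExcept c j (p j) < 6 * π := by
  have oangle_ne_pi : ∀ j k : Fin 4, k ≠ 0 → k + 1 ≠ 0 →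
      ∡ (p (j + k)) (p j) (p (j + (k + 1))) ≠ π := fun j k hk hk' => by
    rw [← add_assoc]
    exact h.oangle_vertex_vertex_ne_pi (fun i => h.le_dist_vertex i j) (h.injective.ne (by simpa))
      (h.injective.ne (by simpa [add_assoc]))
  have sum_eq := sum_cornerAngle h.injective (fun j => oangle_ne_pi j 1 (by decide) (by decide))
    (fun j => oangle_ne_pi j 2 (by decide) (by decide))
    fun j => by linarith [hle j, h.turnExcept_lt_cornerAngle_add_pi j]
  calc ∑ j, turnExcept c j (p j) < ∑ j, (cornerAngle p j + π) :=
        Finset.sum_lt_sum_of_nonempty Finset.univ_nonempty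
          fun j _ => h.turnExcept_lt_cornerAngle_add_pi j
    _ = 6 * π := by
      rw [Finset.sum_add_distrib, sum_eq, Fin.sum_const, nsmul_eq_mul, Nat.cast_ofNat]
      ring

end Quadrilateral

end IsDiskCycle

end Plane

/-! ### Disks in the complex plane -/

theorem extAngle_comm (c₁ : ℂ) (r₁ : ℝ) (c₂ : ℂ) (r₂ : ℝ) :
    extAngle c₁ r₁ c₂ r₂ = extAngle c₂ r₂ c₁ r₁ := by
  rw [extAngle, extAngle, dist_comm, sub_right_comm, mul_right_comm]

theorem extAngle_dist_dist (c₁ p c₂ : ℂ) :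
    extAngle c₁ (dist p c₁) c₂ (dist p c₂) = π - ∠ c₁ p c₂ := by
  rw [extAngle, EuclideanGeometry.angle, InnerProductGeometry.angle, ← arccos_neg,
    real_inner_eq_norm_mul_self_add_norm_mul_self_sub_norm_sub_mul_self_div_two,
    vsub_sub_vsub_cancel_right, dist_comm p, dist_comm p, ← dist_eq_norm_vsub,
    ← dist_eq_norm_vsub, ← dist_eq_norm_vsub]
  congr 1
  ring

theorem sum_extAngle_reverse {n : ℕ} [NeZero n] (c : Fin n → ℂ) (r : Fin n → ℝ) :
    ∑ i, extAngle (c (-i)) (r (-i)) (c (-(i + 1))) (r (-(i + 1)))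
      = ∑ i, extAngle (c i) (r i) (c (i + 1)) (r (i + 1)) := by
  rw [← sum_comp_neg_add_one fun i => extAngle (c i) (r i) (c (i + 1)) (r (i + 1))]
  refine Finset.sum_congr rfl fun i _ => ?_
  rw [extAngle_comm]
  simp

/-- The standard orientation of `ℂ`, which makes the oriented angle `∡` available there. -/
noncomputable instance complexOriented : Module.Oriented ℝ ℂ (Fin 2) := ⟨Complex.orientation⟩

attribute [local instance] Complex.finrank_real_complex_fact

theorem oangle_eq_arg_sub_arg {a z b : ℂ} (ha : a ≠ z) (hb : b ≠ z) :
    ∡ a z b = Complex.arg (b - z) - (Complex.arg (a - z) : Real.Angle) := by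
  rw [← sub_ne_zero] at ha hb
  rw [EuclideanGeometry.oangle, vsub_eq_sub, vsub_eq_sub]
  refine (Complex.oangle (a - z) (b - z)).trans ?_
  rw [Complex.arg_mul_coe_angle ((map_ne_zero _).2 ha) hb, Complex.arg_conj_coe_angle,
    neg_add_eq_sub]

namespace IsDiskCycle

section General

variable {n : ℕ} [NeZero n] {c p : Fin n → ℂ} {r : Fin n → ℝ} {z : ℂ}

theorem exists_isContinuousArgOn (h : IsDiskCycle c p r) (hz : ∀ i, r i < dist z (c i))
    {S : Set ℂ} (hS : IsClosed S) (hcover : S ⊆ ⋃ i, sphere (c i) (r i))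
    (hmeet : MeetOnlyAtVertices c p r S) (h₀ : totalTurn c z = 0) :
    ∃ Φ, IsContinuousArgOn Φ z S := by
  have hz' : ∀ i, r i ≤ dist z (c i) := fun i => (hz i).le
  have center_ne := h.center_ne hz'
  have sphere_ne : ∀ i, ∀ y ∈ sphere (c i) (r i), y ≠ z := by
    rintro i y hy rfl
    exact (hz i).ne' hy
  obtain ⟨φ, coe_φ, φ_succ⟩ := exists_real_lift_of_sum_eq_zero
    (θ := fun i => (Complex.arg (c i - z) : Real.Angle))
    (fun i => by rw [Real.Angle.coe_toReal, oangle_eq_arg_sub_arg (center_ne i) (center_ne _)]) h₀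
  let argOnCircle : Fin n → ℂ → ℝ := fun i y => φ i + (∡ (c i) z y).toReal
  have continuousOn_argOnCircle : ∀ i, ContinuousOn (argOnCircle i) (S ∩ sphere (c i) (r i)) := by
    intro i y hy
    have hlt := angle_lt_pi_div_two_of_dist_le (sphere_ne i y hy.2) (hy.2.trans_le (hz' i))
    exact (continuousAt_const.add (continuousAt_toReal_oangle_right (center_ne i)
      (sphere_ne i y hy.2) (oangle_ne_pi_of_angle_lt_pi_div_two hlt))).continuousWithinAt
  have argOnCircle_vertex : ∀ i, argOnCircle i (p i) = argOnCircle (i + 1) (p i) := fun i => by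
    have hi := h.vertex_ne hz i
    have := toReal_oangle_rev
      (oangle_ne_pi_of_angle_lt_pi_div_two (h.angle_vertex_center_lt hz' hi))
    linarith [φ_succ i, h.toReal_oangle_center_center hz' hi]
  obtain ⟨Φ, hΦ, hΦ_eq⟩ := exists_continuousOn_iUnion (fun i => hS.inter isClosed_sphere)
    continuousOn_argOnCircle fun i k y hy => by
      rcases eq_or_ne i k with rfl | hik
      · rfl
      · rcases hmeet i k hik y hy.1.1 hy.1.2 hy.2.2 with ⟨rfl, rfl⟩ | ⟨rfl, rfl⟩
        exacts [argOnCircle_vertex i, (argOnCircle_vertex k).symm]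
  rw [← Set.inter_iUnion, Set.inter_eq_left.2 hcover] at hΦ
  refine ⟨Φ, hΦ, fun y hy => ?_⟩
  obtain ⟨i, hi⟩ := Set.mem_iUnion.1 (hcover hy)
  rw [hΦ_eq i ⟨hy, hi⟩, Real.Angle.coe_add, coe_φ, Real.Angle.coe_toReal,
    oangle_eq_arg_sub_arg (center_ne i) (sphere_ne i y hi), add_sub_cancel]

theorem totalTurn_ne_zero (h : IsDiskCycle c p r) (hz : ∀ i, r i < dist z (c i)) {U : Set ℂ}
    (hbd : Bornology.IsBounded U) (hzU : z ∈ interior U)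
    (hcover : frontier U ⊆ ⋃ i, sphere (c i) (r i))
    (hmeet : MeetOnlyAtVertices c p r (frontier U)) : totalTurn c z ≠ 0 := fun h₀ =>
  let ⟨Φ, hΦ⟩ := h.exists_isContinuousArgOn hz isClosed_frontier hcover hmeet h₀
  not_isContinuousArgOn_frontier hbd hzU Φ hΦ

theorem totalTurn_eq_const (h : IsDiskCycle c p r) (hn : n ≤ 4) {U : Set ℂ}
    (hU : ∀ z ∈ U, ∀ i, r i < dist z (c i)) (hopen : IsOpen U) (hconn : IsPreconnected U)
    (hbd : Bornology.IsBounded U) (hcover : frontier U ⊆ ⋃ i, sphere (c i) (r i))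
    (hmeet : MeetOnlyAtVertices c p r (frontier U)) :
    (∀ z ∈ U, totalTurn c z = 2 * π) ∨ ∀ z ∈ U, totalTurn c z = -(2 * π) := by
  have mapsTo : Set.MapsTo (totalTurn c) U {2 * π, -(2 * π)} := fun z hz =>
    h.totalTurn_eq_or_eq_neg hn (hU z hz)
      (h.totalTurn_ne_zero (hU z hz) hbd (hopen.interior_eq.symm ▸ hz) hcover hmeet)
  obtain ⟨w, hw, hconst⟩ := hconn.eqOn_const_of_mapsTo (Set.toFinite _).isDiscrete
    (fun z hz => (h.continuousAt_totalTurn (hU z hz)).continuousWithinAt) mapsTo ⟨_, Or.inl rfl⟩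
  rcases hw with rfl | rfl
  exacts [Or.inl hconst, Or.inr hconst]

theorem extAngle_le (h : IsDiskCycle c p r) {j : Fin n}
    (hle : |2 * π - turnExcept c j (p j)| ≤ π) :
    extAngle (c j) (r j) (c (j + 1)) (r (j + 1)) ≤ turnExcept c j (p j) - π := by
  rw [← h.dist_vertex j, ← h.dist_vertex_succ j, extAngle_dist_dist, h.angle_vertex_eq hle]
  linarith [le_abs_self (2 * π - turnExcept c j (p j))]

end General

variable {c p : Fin 4 → ℂ} {r : Fin 4 → ℝ}

theorem sum_extAngle_lt_of_totalTurn_eq (h : IsDiskCycle c p r) {U : Set ℂ}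
    (hp : ∀ j, p j ∈ closure U) (hturn : ∀ z ∈ U, totalTurn c z = 2 * π) :
    ∑ j, extAngle (c j) (r j) (c (j + 1)) (r (j + 1)) < 2 * π := by
  have hle := fun j => h.abs_two_pi_sub_turnExcept_le hturn (hp j)
  calc ∑ j, extAngle (c j) (r j) (c (j + 1)) (r (j + 1)) ≤ ∑ j, (turnExcept c j (p j) - π) :=
        Finset.sum_le_sum fun j _ => h.extAngle_le (hle j)
    _ = ∑ j, turnExcept c j (p j) - 4 * π := by
      rw [Finset.sum_sub_distrib, Fin.sum_const, nsmul_eq_mul, Nat.cast_ofNat]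
    _ < 2 * π := by
      linarith [h.sum_turnExcept_lt fun j => by linarith [(abs_le.1 (hle j)).2]]

theorem sum_extAngle_lt (h : IsDiskCycle c p r) {U : Set ℂ}
    (hU : ∀ z ∈ U, ∀ i, r i < dist z (c i)) (hopen : IsOpen U) (hconn : IsPreconnected U)
    (hbd : Bornology.IsBounded U) (hcover : frontier U ⊆ ⋃ i, sphere (c i) (r i))
    (hp : ∀ j, p j ∈ closure U) (hmeet : MeetOnlyAtVertices c p r (frontier U)) :
    ∑ i, extAngle (c i) (r i) (c (i + 1)) (r (i + 1)) < 2 * π := by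
  rcases h.totalTurn_eq_const le_rfl hU hopen hconn hbd hcover hmeet with hpos | hneg
  · exact h.sum_extAngle_lt_of_totalTurn_eq hp hpos
  · rw [← sum_extAngle_reverse]
    exact h.reverse.sum_extAngle_lt_of_totalTurn_eq (fun j => hp _) fun z hz => by
      rw [h.totalTurn_reverse (hU z hz), hneg z hz, neg_neg]

end IsDiskCycle

/-- **Four-disk quadrilateral angle bound.**  If `D₁, D₂, D₃, D₄` are closed metric
disks in `ℂ` and there is a bounded connected component `U` of the complement of their
union whose boundary is a curvilinear quadrilateral made of four circular arcs, one
from each `∂Dᵢ`, appearing in cyclic order (so that opposite arcs are disjoint and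
consecutive arcs meet in exactly one point), then
`∠(D₁,D₂) + ∠(D₂,D₃) + ∠(D₃,D₄) + ∠(D₄,D₁) < 2π`. -/
theorem four_disk_quadrilateral_angle_sum
    (c : Fin 4 → ℂ) (r : Fin 4 → ℝ) (hr : ∀ i, 0 < r i)
    (U : Set ℂ) (z₀ : ℂ)
    (hz₀ : z₀ ∈ (⋃ i, Metric.closedBall (c i) (r i))ᶜ)
    (hU : U = connectedComponentIn ((⋃ i, Metric.closedBall (c i) (r i))ᶜ) z₀)
    (hbd : Bornology.IsBounded U)
    (hcover : frontier U ⊆ ⋃ i, Metric.sphere (c i) (r i))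
    (harc : ∀ i, (frontier U ∩ Metric.sphere (c i) (r i)).Nonempty)
    (hopp02 : frontier U ∩ Metric.sphere (c 0) (r 0) ∩ Metric.sphere (c 2) (r 2) = ∅)
    (hopp13 : frontier U ∩ Metric.sphere (c 1) (r 1) ∩ Metric.sphere (c 3) (r 3) = ∅)
    (hconsec : ∀ i : Fin 4, ∃! z : ℂ,
      z ∈ frontier U ∩ Metric.sphere (c i) (r i) ∩ Metric.sphere (c (i + 1)) (r (i + 1))) :
    extAngle (c 0) (r 0) (c 1) (r 1) + extAngle (c 1) (r 1) (c 2) (r 2)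
      + extAngle (c 2) (r 2) (c 3) (r 3) + extAngle (c 3) (r 3) (c 0) (r 0)
      < 2 * Real.pi := by
  have isOpen : IsOpen U :=
    hU ▸ (isClosed_iUnion_of_finite fun _ => isClosed_closedBall).isOpen_compl.connectedComponentIn
  have exterior : ∀ z ∈ U, ∀ i, r i < dist z (c i) := fun z hz i => by
    have := connectedComponentIn_subset _ _ (hU ▸ hz)
    simp only [Set.mem_compl_iff, Set.mem_iUnion, mem_closedBall, not_exists, not_le] at this
    exact this i
  have exterior_closure : ∀ z ∈ closure U, ∀ i, r i ≤ dist z (c i) := fun z hz i =>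
    closure_minimal (t := {w | r i ≤ dist w (c i)}) (fun w hw => (exterior w hw i).le)
      (isClosed_le (by fun_prop) (by fun_prop)) hz
  have opposite : ∀ i,
      Disjoint (frontier U ∩ sphere (c i) (r i)) (sphere (c (i + 2)) (r (i + 2))) := by
    simp only [Set.disjoint_iff_inter_eq_empty]
    intro i
    fin_cases i
    exacts [hopp02, hopp13, (Set.inter_right_comm ..).trans hopp02,
      (Set.inter_right_comm ..).trans hopp13]
  obtain ⟨p, cycle, hp, hmeet⟩ := exists_isDiskCycle hr
    (fun z hz => exterior_closure z (frontier_subset_closure hz)) opposite hconsec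
  have sum_lt := cycle.sum_extAngle_lt exterior isOpen (hU ▸ isPreconnected_connectedComponentIn)
    hbd hcover (fun j => frontier_subset_closure (hp j)) hmeet
  rwa [Fin.sum_univ_four] at sum_lt
end

section
/- Let A, B, C be closed disks in ℂ, none of which is contained in any other. Suppose A and C overlap (their interiors meet) and A ∩ C ⊆ B. Then A and B overlap, and ∠(A,C) < ∠(A,B). -/
open Metric Real

/-!
Let `θ_B = ∠(A,B)` and `θ_C = ∠(A,C)`, and suppose `θ_B ≤ θ_C`. Seen from the center of `A`, the
spherical caps `∂A ∩ B` and `∂A ∩ C` have angular radii `ψ` and `φ`, and `∂A ∩ C ⊆ B` says that the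
directions of the centers of `B` and `C` differ by at most `ψ - φ`. In terms of powers of points
this amounts to
`sin θ_C * p_B / r_B + sin (θ_C - θ_B) * p_A / r_A ≤ sin θ_B * p_C / r_C`
on the whole space. Since `p_A ≥ 0` off `A`, it follows that `C \ A ⊆ B`; together with `A ∩ C ⊆ B`
this gives `C ⊆ B`, which is excluded.
-/

section

open InnerProductGeometry EuclideanGeometry.Sphere
open EuclideanGeometry (Sphere)
open scoped RealInnerProductSpace

variable {E : Type*} [NormedAddCommGroup E] [InnerProductSpace ℝ E]

lemma nontrivial_orthogonal_span_singleton (hE : 1 < Module.rank ℝ E) (u : E) :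
    Nontrivial (ℝ ∙ u)ᗮ := by
  rw [Submodule.nontrivial_iff_ne_bot, Ne, Submodule.orthogonal_eq_bot_iff]
  intro hu
  have : Module.rank ℝ E ≤ 1 :=
    Module.rank_le_one_iff_top_isPrincipal.2 ⟨u, hu.symm⟩
  exact this.not_gt hE

lemma exists_norm_eq_one_norm_smul_eq {F : Type*} [NormedAddCommGroup F] [NormedSpace ℝ F]
    [Nontrivial F] (w : F) : ∃ e : F, ‖e‖ = 1 ∧ ‖w‖ • e = w := by
  rcases eq_or_ne w 0 with rfl | hw
  · obtain ⟨e, he⟩ := exists_norm_eq F zero_le_one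
    exact ⟨e, he, by simp⟩
  · exact ⟨‖w‖⁻¹ • w, norm_smul_inv_norm hw, smul_inv_smul₀ (norm_ne_zero_iff.2 hw) w⟩

lemma exists_unit_orthogonal_inner_eq_norm_mul_sin_angle (hE : 1 < Module.rank ℝ E) {u : E}
    (hu : u ≠ 0) (v : E) :
    ∃ e : E, ‖e‖ = 1 ∧ ⟪e, u⟫ = 0 ∧ ⟪e, v⟫ = ‖v‖ * sin (angle u v) := by
  have := nontrivial_orthogonal_span_singleton hE u
  have hu' : ‖u‖ ≠ 0 := norm_ne_zero_iff.2 hu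
  have huv := cos_angle_mul_norm_mul_norm u v
  set w : E := v - (‖v‖ * cos (angle u v) / ‖u‖) • u with hw
  have hwu : ⟪u, w⟫ = 0 := by
    rw [hw, inner_sub_right, real_inner_smul_right, real_inner_self_eq_norm_sq, ← huv]
    field_simp
    ring
  have hww : ‖w‖ = ‖v‖ * sin (angle u v) := by
    rw [← sq_eq_sq₀ (norm_nonneg w) (mul_nonneg (norm_nonneg v) (sin_angle_nonneg u v)),
      mul_pow, sin_sq, hw, norm_sub_sq_real, real_inner_smul_right, norm_smul, real_inner_comm,
      ← huv, norm_eq_abs, mul_pow, sq_abs]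
    field_simp
    ring
  obtain ⟨e, he, hew⟩ := exists_norm_eq_one_norm_smul_eq
    (⟨w, Submodule.mem_orthogonal_singleton_iff_inner_right.2 hwu⟩ : (ℝ ∙ u)ᗮ)
  have heu : ⟪(e : E), u⟫ = 0 := Submodule.mem_orthogonal_singleton_iff_inner_left.1 e.2
  refine ⟨e, he, heu, ?_⟩
  have hv : v = ‖w‖ • (e : E) + (‖v‖ * cos (angle u v) / ‖u‖) • u := by
    rw [show ‖w‖ • (e : E) = w from congrArg Subtype.val hew, hw, sub_add_cancel]
  have he' : ‖(e : E)‖ = 1 := he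
  calc ⟪(e : E), v⟫ = ⟪(e : E), ‖w‖ • (e : E) + (‖v‖ * cos (angle u v) / ‖u‖) • u⟫ := by rw [← hv]
    _ = ‖w‖ := by
      rw [inner_add_right, real_inner_smul_right, real_inner_smul_right, heu,
        real_inner_self_eq_norm_sq, he']
      ring
    _ = ‖v‖ * sin (angle u v) := hww

lemma angle_eq_of_inner_eq {x u : E} {t : ℝ} (hx : ‖x‖ = 1) (hu : u ≠ 0) (ht₀ : 0 ≤ t)
    (htπ : t ≤ π) (h : ⟪x, u⟫ = ‖u‖ * cos t) : angle x u = t := by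
  rw [angle, h, hx, one_mul, mul_div_cancel_left₀ _ (norm_ne_zero_iff.2 hu), arccos_cos ht₀ htπ]

lemma exists_angle_eq_and_angle_eq_angle_add (hE : 1 < Module.rank ℝ E) {u v : E} (hu : u ≠ 0)
    (hv : v ≠ 0) {φ : ℝ} (hφ : 0 ≤ φ) (h : angle u v + φ ≤ π) :
    ∃ x : E, ‖x‖ = 1 ∧ angle x u = φ ∧ angle x v = angle u v + φ := by
  obtain ⟨e, he, heu, hev⟩ := exists_unit_orthogonal_inner_eq_norm_mul_sin_angle hE hu v
  have hu' : ‖u‖ ≠ 0 := norm_ne_zero_iff.2 hu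
  have hδ := angle_nonneg u v
  set x : E := (cos φ / ‖u‖) • u - sin φ • e with hx
  have hxu : ⟪x, u⟫ = ‖u‖ * cos φ := by
    rw [hx, inner_sub_left, real_inner_smul_left, real_inner_smul_left, heu,
      real_inner_self_eq_norm_sq]
    field_simp
    ring
  have hxv : ⟪x, v⟫ = ‖v‖ * cos (angle u v + φ) := by
    rw [hx, inner_sub_left, real_inner_smul_left, real_inner_smul_left, hev,
      ← cos_angle_mul_norm_mul_norm u v, cos_add]
    field_simp
  have hx1 : ‖x‖ = 1 := by
    rw [← sq_eq_sq₀ (norm_nonneg x) zero_le_one, hx, norm_sub_sq_real, real_inner_smul_left,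
      real_inner_smul_right, real_inner_comm, heu, norm_smul, norm_smul, he, norm_eq_abs,
      norm_eq_abs, mul_pow, mul_pow, sq_abs, sq_abs]
    field_simp
    linear_combination ‖u‖ * cos_sq_add_sin_sq φ
  exact ⟨x, hx1, angle_eq_of_inner_eq hx1 hu hφ (by linarith) hxu,
    angle_eq_of_inner_eq hx1 hv (by linarith) h hxv⟩

lemma angle_add_le_of_forall_angle_le (hE : 1 < Module.rank ℝ E) {u v : E} (hu : u ≠ 0)
    (hv : v ≠ 0) {φ ψ : ℝ} (hφ : 0 ≤ φ) (hψ : ψ < π)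
    (h : ∀ x : E, ‖x‖ = 1 → angle x u ≤ φ → angle x v ≤ ψ) : angle u v + φ ≤ ψ := by
  rcases le_or_gt (angle u v + φ) π with hle | hgt
  · obtain ⟨x, hx, hxu, hxv⟩ := exists_angle_eq_and_angle_eq_angle_add hE hu hv hφ hle
    exact hxv ▸ h x hx hxu.le
  · -- the antipode of `v` lies in the cap around `u`
    have hnorm : ‖-(‖v‖⁻¹ • v)‖ = 1 := by rw [norm_neg]; exact norm_smul_inv_norm hv
    have hpos : 0 < ‖v‖⁻¹ := inv_pos.2 (norm_pos_iff.2 hv)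
    have hu' : angle (-(‖v‖⁻¹ • v)) u ≤ φ := by
      rw [angle_neg_left, angle_smul_left_of_pos _ _ hpos, angle_comm]
      linarith
    have hv' : angle (-(‖v‖⁻¹ • v)) v = π := by
      rw [angle_neg_left, angle_smul_left_of_pos _ _ hpos, angle_self hv, sub_zero]
    exact absurd (hv' ▸ h _ hnorm hu') hψ.not_ge

lemma norm_smul_sub_smul_le_mul_sin_sub {u v : E} {φ ψ : ℝ} (hφ : 0 ≤ φ) (hψ : ψ ≤ π)
    (h : angle u v + φ ≤ ψ) :
    ‖(‖v‖ * sin ψ) • u - (‖u‖ * sin φ) • v‖ ≤ ‖u‖ * ‖v‖ * sin (ψ - φ) := by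
  have hδ := angle_nonneg u v
  have hsin : 0 ≤ sin (ψ - φ) := sin_nonneg_of_nonneg_of_le_pi (by linarith) (by linarith)
  have hsinφ : 0 ≤ sin φ := sin_nonneg_of_nonneg_of_le_pi hφ (by linarith)
  have hsinψ : 0 ≤ sin ψ := sin_nonneg_of_nonneg_of_le_pi (by linarith) hψ
  have hcos : cos (ψ - φ) ≤ cos (angle u v) :=
    cos_le_cos_of_nonneg_of_le_pi hδ (by linarith) (by linarith)
  have hsin_sq : sin (ψ - φ) ^ 2
      = sin ψ ^ 2 + sin φ ^ 2 - 2 * (sin ψ * sin φ) * cos (ψ - φ) := by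
    rw [sin_sub, cos_sub]
    linear_combination sin φ ^ 2 * sin_sq_add_cos_sq ψ + sin ψ ^ 2 * sin_sq_add_cos_sq φ
  refine le_of_sq_le_sq ?_ (by positivity)
  calc ‖(‖v‖ * sin ψ) • u - (‖u‖ * sin φ) • v‖ ^ 2
      = (‖u‖ * ‖v‖) ^ 2 *
        (sin ψ ^ 2 + sin φ ^ 2 - 2 * (sin ψ * sin φ) * cos (angle u v)) := by
        rw [norm_sub_sq_real, real_inner_smul_left, real_inner_smul_right,
          ← cos_angle_mul_norm_mul_norm u v, norm_smul, norm_smul, norm_eq_abs, norm_eq_abs,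
          mul_pow, mul_pow, sq_abs, sq_abs]
        ring
    _ ≤ (‖u‖ * ‖v‖) ^ 2 * sin (ψ - φ) ^ 2 := by
        rw [hsin_sq]
        gcongr
    _ = (‖u‖ * ‖v‖ * sin (ψ - φ)) ^ 2 := by ring

/-- A quadratic function whose sign on the sphere of radius `ρ` about the origin detects the cap of
angular radius `ψ` around the direction of `v`: there it is nonpositive exactly on the cap. Among
the quadratic functions with this property it is singled out, up to scaling, by being orthogonal,
for the Lorentzian form on spheres, to the power function `‖y‖ ^ 2 - ρ ^ 2` of that sphere. -/
noncomputable def capForm (ρ : ℝ) (v : E) (ψ : ℝ) (y : E) : ℝ :=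
  ‖v‖ * cos ψ * (‖y‖ ^ 2 + ρ ^ 2) - 2 * ρ * ⟪y, v⟫

lemma norm_mul_sin_mul_capForm_le {u v : E} {φ ψ ρ : ℝ} (hφ : 0 ≤ φ) (hψ : ψ ≤ π)
    (hρ : 0 ≤ ρ) (h : angle u v + φ ≤ ψ) (y : E) :
    ‖u‖ * sin φ * capForm ρ v ψ y ≤ ‖v‖ * sin ψ * capForm ρ u φ y := by
  have hsin : 0 ≤ sin (ψ - φ) :=
    sin_nonneg_of_nonneg_of_le_pi (by linarith [angle_nonneg u v]) (by linarith)
  have hinner : 2 * ρ * (‖v‖ * sin ψ * ⟪y, u⟫ - ‖u‖ * sin φ * ⟪y, v⟫) ≤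
      ‖u‖ * ‖v‖ * sin (ψ - φ) * (‖y‖ ^ 2 + ρ ^ 2) :=
    calc 2 * ρ * (‖v‖ * sin ψ * ⟪y, u⟫ - ‖u‖ * sin φ * ⟪y, v⟫)
        = 2 * ρ * ⟪y, (‖v‖ * sin ψ) • u - (‖u‖ * sin φ) • v⟫ := by
          rw [inner_sub_right, real_inner_smul_right, real_inner_smul_right]
      _ ≤ 2 * ρ * (‖y‖ * (‖u‖ * ‖v‖ * sin (ψ - φ))) := by
          gcongr
          exact (real_inner_le_norm _ _).trans
            (by gcongr; exact norm_smul_sub_smul_le_mul_sin_sub hφ hψ h)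
      _ = ‖u‖ * ‖v‖ * sin (ψ - φ) * (2 * ‖y‖ * ρ) := by ring
      _ ≤ ‖u‖ * ‖v‖ * sin (ψ - φ) * (‖y‖ ^ 2 + ρ ^ 2) := by
          gcongr
          exact two_mul_le_add_sq ‖y‖ ρ
  rw [sin_sub] at hinner
  unfold capForm
  linarith

section MetricSpace

variable {P : Type*} [MetricSpace P]

/-- The external intersection angle of two spheres, computed from their radii and the distance of
their centers. It extends `extAngle` from disks in `ℂ` to balls in an arbitrary metric space. -/
noncomputable def sphereExtAngle (S T : Sphere P) : ℝ :=
  arccos ((dist S.center T.center ^ 2 - S.radius ^ 2 - T.radius ^ 2) / (2 * S.radius * T.radius))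

/-- The angular radius, seen from the center of `S`, of the spherical cap cut out of `S` by the
closed ball bounded by `T`. It is read off the law of cosines and has this meaning only when
the two spheres cross. -/
noncomputable def capAngle (S T : Sphere P) : ℝ :=
  arccos ((S.radius ^ 2 + dist S.center T.center ^ 2 - T.radius ^ 2) /
    (2 * S.radius * dist S.center T.center))

/-- Two spheres cross: the balls they bound overlap and neither contains the other. This is
expressed by the strict triangle inequalities between the two radii and the distance of the
centers. -/
structure Crosses (S T : Sphere P) : Prop where
  abs_radius_sub_lt_dist : |S.radius - T.radius| < dist S.center T.center
  dist_lt_radius_add : dist S.center T.center < S.radius + T.radius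

lemma crosses_of_not_closedBall_subset {S T : Sphere P}
    (hST : ¬ closedBall S.center S.radius ⊆ closedBall T.center T.radius)
    (hTS : ¬ closedBall T.center T.radius ⊆ closedBall S.center S.radius)
    (hov : (ball S.center S.radius ∩ ball T.center T.radius).Nonempty) : Crosses S T where
  abs_radius_sub_lt_dist := by
    rw [abs_sub_lt_iff]
    constructor
    · contrapose! hTS
      exact closedBall_subset_closedBall' (by rw [dist_comm]; linarith)
    · contrapose! hST
      exact closedBall_subset_closedBall' (by linarith)
  dist_lt_radius_add := by
    contrapose! hov
    exact (ball_disjoint_ball hov).inter_eq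

lemma sq_add_sq_sub_sq_div_mem_Ioo {a b c : ℝ} (hc : |a - b| < c) (hc' : c < a + b) :
    (a ^ 2 + b ^ 2 - c ^ 2) / (2 * a * b) ∈ Set.Ioo (-1) 1 := by
  obtain ⟨hab, hba⟩ := abs_sub_lt_iff.1 hc
  have ha : 0 < a := by linarith
  have hb : 0 < b := by linarith
  have hpos : 0 < 2 * a * b := by positivity
  rw [Set.mem_Ioo, lt_div_iff₀ hpos, div_lt_iff₀ hpos]
  constructor <;> nlinarith

namespace Crosses

variable {S T : Sphere P}

lemma radius_pos_left (h : Crosses S T) : 0 < S.radius := by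
  linarith [(abs_sub_lt_iff.1 h.abs_radius_sub_lt_dist).2, h.dist_lt_radius_add]

lemma radius_pos_right (h : Crosses S T) : 0 < T.radius := by
  linarith [(abs_sub_lt_iff.1 h.abs_radius_sub_lt_dist).1, h.dist_lt_radius_add]

lemma dist_center_pos (h : Crosses S T) : 0 < dist S.center T.center :=
  (abs_nonneg _).trans_lt h.abs_radius_sub_lt_dist

lemma sphereExtAngle_arg_mem_Ioo (h : Crosses S T) :
    (dist S.center T.center ^ 2 - S.radius ^ 2 - T.radius ^ 2) / (2 * S.radius * T.radius)
      ∈ Set.Ioo (-1) 1 := by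
  have hlaw := sq_add_sq_sub_sq_div_mem_Ioo h.abs_radius_sub_lt_dist h.dist_lt_radius_add
  rw [sub_sub, ← neg_sub, neg_div]
  exact ⟨neg_lt_neg hlaw.2, neg_lt.1 hlaw.1⟩

lemma capAngle_arg_mem_Ioo (h : Crosses S T) :
    (S.radius ^ 2 + dist S.center T.center ^ 2 - T.radius ^ 2) /
      (2 * S.radius * dist S.center T.center) ∈ Set.Ioo (-1) 1 := by
  obtain ⟨hST, hTS⟩ := abs_sub_lt_iff.1 h.abs_radius_sub_lt_dist
  exact sq_add_sq_sub_sq_div_mem_Ioo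
    (abs_sub_lt_iff.2 ⟨by linarith, by linarith [h.dist_lt_radius_add]⟩) (by linarith)

lemma sphereExtAngle_mem_Ioo (h : Crosses S T) : sphereExtAngle S T ∈ Set.Ioo 0 π :=
  ⟨arccos_pos.2 h.sphereExtAngle_arg_mem_Ioo.2, arccos_lt_pi.2 h.sphereExtAngle_arg_mem_Ioo.1⟩

lemma capAngle_mem_Ioo (h : Crosses S T) : capAngle S T ∈ Set.Ioo 0 π :=
  ⟨arccos_pos.2 h.capAngle_arg_mem_Ioo.2, arccos_lt_pi.2 h.capAngle_arg_mem_Ioo.1⟩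

lemma two_mul_radius_mul_radius_mul_cos_sphereExtAngle (h : Crosses S T) :
    2 * S.radius * T.radius * cos (sphereExtAngle S T)
      = dist S.center T.center ^ 2 - S.radius ^ 2 - T.radius ^ 2 := by
  have hS := h.radius_pos_left
  have hT := h.radius_pos_right
  have harg := h.sphereExtAngle_arg_mem_Ioo
  rw [sphereExtAngle, cos_arccos harg.1.le harg.2.le, mul_div_cancel₀ _ (by positivity)]

lemma two_mul_radius_mul_dist_mul_cos_capAngle (h : Crosses S T) :
    2 * S.radius * dist S.center T.center * cos (capAngle S T)
      = S.radius ^ 2 + dist S.center T.center ^ 2 - T.radius ^ 2 := by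
  have hS := h.radius_pos_left
  have hd := h.dist_center_pos
  have harg := h.capAngle_arg_mem_Ioo
  rw [capAngle, cos_arccos harg.1.le harg.2.le, mul_div_cancel₀ _ (by positivity)]

lemma dist_mul_cos_capAngle (h : Crosses S T) :
    dist S.center T.center * cos (capAngle S T)
      = S.radius + T.radius * cos (sphereExtAngle S T) := by
  refine mul_left_cancel₀ (mul_pos two_pos h.radius_pos_left).ne' ?_
  linear_combination h.two_mul_radius_mul_dist_mul_cos_capAngle
    - h.two_mul_radius_mul_radius_mul_cos_sphereExtAngle

lemma dist_mul_sin_capAngle (h : Crosses S T) :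
    dist S.center T.center * sin (capAngle S T) = T.radius * sin (sphereExtAngle S T) := by
  have hT := h.radius_pos_right
  have hcap : 0 < sin (capAngle S T) := sin_pos_of_mem_Ioo h.capAngle_mem_Ioo
  have hext : 0 < sin (sphereExtAngle S T) := sin_pos_of_mem_Ioo h.sphereExtAngle_mem_Ioo
  rw [← sq_eq_sq₀ (by positivity) (by positivity), mul_pow, mul_pow, sin_sq, sin_sq]
  linear_combination (-dist S.center T.center * cos (capAngle S T)
    - S.radius - T.radius * cos (sphereExtAngle S T)) * h.dist_mul_cos_capAngle
    - h.two_mul_radius_mul_radius_mul_cos_sphereExtAngle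

end Crosses

end MetricSpace

namespace Crosses

variable {S T : Sphere E}

lemma add_mem_closedBall_iff_angle_le_capAngle (h : Crosses S T) {y : E} (hy : ‖y‖ = S.radius) :
    S.center + y ∈ closedBall T.center T.radius ↔
      angle y (T.center - S.center) ≤ capAngle S T := by
  have hS := h.radius_pos_left
  have hd := h.dist_center_pos
  have hpower : T.power (S.center + y) =
      2 * S.radius * dist S.center T.center * cos (capAngle S T) -
        2 * S.radius * dist S.center T.center * cos (angle y (T.center - S.center)) := by
    have hlaw := norm_sub_sq_eq_norm_sq_add_norm_sq_sub_two_mul_norm_mul_norm_mul_cos_angle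
      y (T.center - S.center)
    rw [hy, ← dist_eq_norm' S.center] at hlaw
    rw [power, dist_eq_norm,
      show S.center + y - T.center = y - (T.center - S.center) by abel]
    linear_combination hlaw - h.two_mul_radius_mul_dist_mul_cos_capAngle
  rw [mem_closedBall, ← power_nonpos_iff_dist_center_le_radius h.radius_pos_right.le, hpower,
    sub_nonpos, mul_le_mul_iff_right₀ (by positivity)]
  exact strictAntiOn_cos.le_iff_ge (Set.Ioo_subset_Icc_self h.capAngle_mem_Ioo)
    ⟨angle_nonneg _ _, angle_le_pi _ _⟩

lemma radius_mul_power_add_eq_capForm (h : Crosses S T) (x : E) :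
    S.radius * T.power x + T.radius * cos (sphereExtAngle S T) * S.power x =
      capForm S.radius (T.center - S.center) (capAngle S T) (x - S.center) := by
  have hdist : dist x T.center ^ 2 = ‖x - S.center‖ ^ 2
      - 2 * ⟪x - S.center, T.center - S.center⟫ + dist S.center T.center ^ 2 := by
    rw [dist_eq_norm' S.center, ← norm_sub_sq_real, dist_eq_norm, sub_sub_sub_cancel_right]
  rw [capForm, power, power, hdist, dist_eq_norm x S.center, ← dist_eq_norm' S.center T.center,
    h.dist_mul_cos_capAngle]
  linear_combination (-S.radius) * h.two_mul_radius_mul_radius_mul_cos_sphereExtAngle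

end Crosses

variable {A B C : Sphere E}

lemma angle_add_capAngle_le_capAngle (hE : 1 < Module.rank ℝ E) (hB : Crosses A B)
    (hC : Crosses A C)
    (hsub : sphere A.center A.radius ∩ closedBall C.center C.radius ⊆
      closedBall B.center B.radius) :
    angle (C.center - A.center) (B.center - A.center) + capAngle A C ≤ capAngle A B := by
  have hA := hB.radius_pos_left
  have hAB : B.center - A.center ≠ 0 := sub_ne_zero.2 (dist_pos.1 hB.dist_center_pos).symm
  have hAC : C.center - A.center ≠ 0 := sub_ne_zero.2 (dist_pos.1 hC.dist_center_pos).symm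
  refine angle_add_le_of_forall_angle_le hE hAC hAB hC.capAngle_mem_Ioo.1.le
    hB.capAngle_mem_Ioo.2 fun x hx hxC => ?_
  have hnorm : ‖A.radius • x‖ = A.radius := by
    rw [norm_smul, hx, mul_one, norm_of_nonneg hA.le]
  rw [← angle_smul_left_of_pos x _ hA] at hxC ⊢
  rw [← hB.add_mem_closedBall_iff_angle_le_capAngle hnorm]
  exact hsub ⟨by rwa [mem_sphere, dist_self_add_left],
    (hC.add_mem_closedBall_iff_angle_le_capAngle hnorm).2 hxC⟩

lemma power_add_power_le_power (hB : Crosses A B) (hC : Crosses A C)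
    (h : angle (C.center - A.center) (B.center - A.center) + capAngle A C ≤ capAngle A B)
    (x : E) :
    sin (sphereExtAngle A C) * (B.power x / B.radius)
        + sin (sphereExtAngle A C - sphereExtAngle A B) * (A.power x / A.radius) ≤
      sin (sphereExtAngle A B) * (C.power x / C.radius) := by
  have hA := hB.radius_pos_left
  have hB₀ := hB.radius_pos_right
  have hC₀ := hC.radius_pos_right
  have hcap := norm_mul_sin_mul_capForm_le hC.capAngle_mem_Ioo.1.le
    hB.capAngle_mem_Ioo.2.le hA.le h (x - A.center)
  rw [← dist_eq_norm' A.center, ← dist_eq_norm' A.center, ← hB.radius_mul_power_add_eq_capForm,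
    ← hC.radius_mul_power_add_eq_capForm, hB.dist_mul_sin_capAngle,
    hC.dist_mul_sin_capAngle] at hcap
  rw [sin_sub, ← sub_nonneg]
  refine (div_nonneg (sub_nonneg.2 hcap) (mul_pos (mul_pos hA hB₀) hC₀).le).trans_eq ?_
  field_simp
  ring

lemma closedBall_subset_of_sphereExtAngle_le (hE : 1 < Module.rank ℝ E) (hB : Crosses A B)
    (hC : Crosses A C)
    (hsub : closedBall A.center A.radius ∩ closedBall C.center C.radius ⊆
      closedBall B.center B.radius)
    (hle : sphereExtAngle A B ≤ sphereExtAngle A C) :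
    closedBall C.center C.radius ⊆ closedBall B.center B.radius := by
  intro x hxC
  rcases le_total (dist x A.center) A.radius with hxA | hxA
  · exact hsub ⟨hxA, hxC⟩
  have hcap := angle_add_capAngle_le_capAngle hE hB hC
    ((Set.inter_subset_inter_left _ sphere_subset_closedBall).trans hsub)
  have hpower := power_add_power_le_power hB hC hcap x
  have hpowerA : 0 ≤ sin (sphereExtAngle A C - sphereExtAngle A B) * (A.power x / A.radius) :=
    mul_nonneg
      (sin_nonneg_of_nonneg_of_le_pi (sub_nonneg.2 hle)
        (by linarith [hB.sphereExtAngle_mem_Ioo.1, hC.sphereExtAngle_mem_Ioo.2]))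
      (div_nonneg ((power_nonneg_iff_radius_le_dist_center hB.radius_pos_left.le).2 hxA)
        hB.radius_pos_left.le)
  have hpowerC : sin (sphereExtAngle A B) * (C.power x / C.radius) ≤ 0 :=
    mul_nonpos_of_nonneg_of_nonpos (sin_pos_of_mem_Ioo hB.sphereExtAngle_mem_Ioo).le
      (div_nonpos_of_nonpos_of_nonneg
        ((power_nonpos_iff_dist_center_le_radius hC.radius_pos_right.le).2 hxC)
        hC.radius_pos_right.le)
  have hpowerB : B.power x / B.radius ≤ 0 :=
    nonpos_of_mul_nonpos_right (by linarith) (sin_pos_of_mem_Ioo hC.sphereExtAngle_mem_Ioo)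
  rw [div_le_iff₀ hB.radius_pos_right, zero_mul] at hpowerB
  exact (power_nonpos_iff_dist_center_le_radius hB.radius_pos_right.le).1 hpowerB

lemma ball_inter_ball_subset_ball [Nontrivial E] {a b c : E} {r s t : ℝ}
    (h : closedBall a r ∩ closedBall c t ⊆ closedBall b s) : ball a r ∩ ball c t ⊆ ball b s := by
  rw [← interior_closedBall' b s]
  exact interior_maximal
    ((Set.inter_subset_inter ball_subset_closedBall ball_subset_closedBall).trans h)
    (isOpen_ball.inter isOpen_ball)

theorem lem_mogwai_general (hE : 1 < Module.rank ℝ E) (A B C : Sphere E)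
    (hAB : ¬ closedBall A.center A.radius ⊆ closedBall B.center B.radius)
    (hBA : ¬ closedBall B.center B.radius ⊆ closedBall A.center A.radius)
    (hCB : ¬ closedBall C.center C.radius ⊆ closedBall B.center B.radius)
    (hovAC : (ball A.center A.radius ∩ ball C.center C.radius).Nonempty)
    (hsub : closedBall A.center A.radius ∩ closedBall C.center C.radius ⊆
      closedBall B.center B.radius) :
    (ball A.center A.radius ∩ ball B.center B.radius).Nonempty ∧
      sphereExtAngle A C < sphereExtAngle A B := by
  have : Nontrivial E := rank_pos_iff_nontrivial.1 (zero_lt_one.trans hE)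
  have hovAB : (ball A.center A.radius ∩ ball B.center B.radius).Nonempty :=
    hovAC.mono fun _ hx => ⟨hx.1, ball_inter_ball_subset_ball hsub hx⟩
  have hAC : ¬ closedBall A.center A.radius ⊆ closedBall C.center C.radius :=
    fun h => hAB ((Set.subset_inter subset_rfl h).trans hsub)
  have hCA : ¬ closedBall C.center C.radius ⊆ closedBall A.center A.radius :=
    fun h => hCB ((Set.subset_inter h subset_rfl).trans hsub)
  have hB : Crosses A B := crosses_of_not_closedBall_subset hAB hBA hovAB
  have hC : Crosses A C := crosses_of_not_closedBall_subset hAC hCA hovAC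
  refine ⟨hovAB, ?_⟩
  by_contra! hle
  exact hCB (closedBall_subset_of_sphereExtAngle_le hE hB hC hsub hle)

end

/-- **Lemma (mogwai).** Let `A`, `B`, `C` be closed disks in `ℂ`, none contained in any
other.  If `A` and `C` overlap (their interiors meet) and `A ∩ C ⊆ B`, then `A` and `B`
overlap and `∠(A,C) < ∠(A,B)`. -/
theorem lem_mogwai
    (cA cB cC : ℂ) (rA rB rC : ℝ) (hrA : 0 < rA) (hrB : 0 < rB) (hrC : 0 < rC)
    (hAB : ¬ closedBall cA rA ⊆ closedBall cB rB)
    (hBA : ¬ closedBall cB rB ⊆ closedBall cA rA)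
    (hAC : ¬ closedBall cA rA ⊆ closedBall cC rC)
    (hCA : ¬ closedBall cC rC ⊆ closedBall cA rA)
    (hBC : ¬ closedBall cB rB ⊆ closedBall cC rC)
    (hCB : ¬ closedBall cC rC ⊆ closedBall cB rB)
    (hovAC : (ball cA rA ∩ ball cC rC).Nonempty)
    (hsub : closedBall cA rA ∩ closedBall cC rC ⊆ closedBall cB rB) :
    (ball cA rA ∩ ball cB rB).Nonempty ∧
      extAngle cA rA cC rC < extAngle cA rA cB rB :=
  lem_mogwai_general (by rw [Complex.rank_real_complex]; exact Cardinal.one_lt_two)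
    ⟨cA, rA⟩ ⟨cB, rB⟩ ⟨cC, rC⟩ hAB hBA hCB hovAC hsub
end
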